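/- arXiv:1211.2558 — 2 statements merged into one kernel-verified Lean document; each statement's English description precedes it below -/
import Mathlib

section
/- Every 1-extendable graph with more than two vertices is 2-connected. Here a graph G is 1-extendable if it is connected, has at least one edge, and every edge of G lies in some perfect matching of G. -/
namespace SimpleGraph

/-- A finite set of vertices that is closed under a perfect matching has even cardinality. -/
theorem Subgraph.IsPerfectMatching.even_ncard_of_closed {V : Type*} [Finite V] {G : SimpleGraph V}
    {M : G.Subgraph} (hM : M.IsPerfectMatching) {S : Set V}
    (hS : ∀ a ∈ S, ∀ b, M.Adj a b → b ∈ S) : Even S.ncard := by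
  classical
  have := Fintype.ofFinite V
  have hmatch : (M.induce S).IsMatching := by
    intro a ha
    obtain ⟨b, hab, huniq⟩ := hM.1 (hM.2 a)
    exact ⟨b, ⟨ha, hS a ha b hab, hab⟩, fun c hc => huniq c hc.2.2⟩
  have heven := hmatch.even_card
  rwa [← Set.ncard_eq_toFinset_card', Subgraph.induce_verts] at heven

/-- In a connected graph, a nonempty set of vertices whose only possible outside neighbour is `v`
contains a neighbour of `v`. -/
theorem Connected.exists_mem_adj_of_boundary {V : Type*} {G : SimpleGraph V} (hG : G.Connected)
    {v : V} {S : Set V} (hv : v ∉ S) (hne : S.Nonempty)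
    (hS : ∀ a ∈ S, ∀ b ∉ S, G.Adj a b → b = v) : ∃ s ∈ S, G.Adj v s := by
  obtain ⟨a, ha⟩ := hne
  obtain ⟨p⟩ := hG a v
  obtain ⟨d, -, hfst, hsnd⟩ := p.exists_boundary_dart S ha hv
  exact ⟨d.fst, hfst, hS _ hfst _ hsnd d.adj ▸ d.adj.symm⟩

/-- If every edge of a connected finite graph lies in a perfect matching, then a nonempty set `S`
of vertices other than `v` that can be left only through `v` contains every vertex other
than `v`. -/
theorem Connected.mem_of_boundary_of_forall_edge_mem_perfectMatching {V : Type*} [Finite V]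
    {G : SimpleGraph V} (hG : G.Connected)
    (hext : ∀ e ∈ G.edgeSet, ∃ M : G.Subgraph, M.IsPerfectMatching ∧ e ∈ M.edgeSet)
    {v : V} {S : Set V} (hv : v ∉ S) (hne : S.Nonempty)
    (hS : ∀ a ∈ S, ∀ b ∉ S, G.Adj a b → b = v) {x : V} (hx : x ≠ v) : x ∈ S := by
  by_contra hxS
  obtain ⟨s, hs, hvs⟩ := hG.exists_mem_adj_of_boundary hv hne hS
  obtain ⟨t, ⟨htv, htS⟩, hvt⟩ : ∃ t ∈ {y | y ≠ v ∧ y ∉ S}, G.Adj v t := by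
    refine hG.exists_mem_adj_of_boundary (by simp) ⟨x, hx, hxS⟩ ?_
    rintro a ⟨hav, haS⟩ b hb hab
    by_contra hbv
    have hbS : b ∈ S := by
      by_contra hbS
      exact hb ⟨hbv, hbS⟩
    exact hav (hS b hbS a haS hab.symm)
  obtain ⟨M, hM, hMs⟩ := hext s(v, s) hvs
  obtain ⟨N, hN, hNt⟩ := hext s(v, t) hvt
  rw [Subgraph.mem_edgeSet] at hMs hNt
  have hodd : Even (insert v S).ncard := by
    refine hM.even_ncard_of_closed ?_
    rintro a (rfl | ha) b hab
    · exact Or.inr (hM.1.eq_of_adj_left hMs hab ▸ hs)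
    · by_cases hb : b ∈ S
      · exact Or.inr hb
      · exact Or.inl (hS a ha b hb hab.adj_sub)
  have heven : Even S.ncard := by
    refine hN.even_ncard_of_closed fun a ha b hab => ?_
    by_contra hb
    obtain rfl := hS a ha b hb hab.adj_sub
    exact htS (hN.1.eq_of_adj_left hab.symm hNt ▸ ha)
  rw [Set.ncard_insert_of_notMem hv, Nat.even_add_one] at hodd
  exact hodd heven

end SimpleGraph

/-- Every 1-extendable graph (connected, with an edge, in which every edge lies in some
perfect matching) on more than two vertices is 2-connected: it is connected and remains
connected after deleting any single vertex. -/
theorem one_extendable_two_connected {V : Type*} [Fintype V] (G : SimpleGraph V)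
    (hconn : G.Connected)
    (hedge : ∃ e, e ∈ G.edgeSet)
    (hext : ∀ e ∈ G.edgeSet, ∃ M : G.Subgraph, M.IsPerfectMatching ∧ e ∈ M.edgeSet)
    (hcard : 2 < Fintype.card V) :
    G.Connected ∧ ∀ v : V, (G.induce {u : V | u ≠ v}).Connected := by
  refine ⟨hconn, fun v => ?_⟩
  have : Nontrivial V := Fintype.one_lt_card_iff_nontrivial.mp (by omega)
  obtain ⟨w, hw⟩ := exists_ne v
  refine (SimpleGraph.connected_iff _).mpr ⟨?_, ⟨⟨w, hw⟩⟩⟩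
  rintro ⟨a, ha⟩ ⟨x, hx⟩
  let S : Set V := {y | ∃ hy : y ≠ v, (G.induce {u : V | u ≠ v}).Reachable ⟨a, ha⟩ ⟨y, hy⟩}
  have hxS : x ∈ S := by
    refine hconn.mem_of_boundary_of_forall_edge_mem_perfectMatching hext (v := v) (S := S)
      (fun h => h.1 rfl) ⟨a, ha, .refl _⟩ ?_ hx
    rintro b ⟨hbv, hb⟩ c hc hbc
    by_contra hcv
    have hadj : (G.induce {u : V | u ≠ v}).Adj ⟨b, hbv⟩ ⟨c, hcv⟩ := hbc
    exact hc ⟨hcv, hb.trans hadj.reachable⟩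
  exact hxS.2
end

section
/- Let G be a finite connected graph and let A, B be sets of vertices. Then the minimum cardinality of a vertex set separating A from B equals the maximum number of pairwise disjoint A–B paths in G (Menger's theorem, vertex version). -/
namespace SimpleGraph

variable {V : Type*} {G H : SimpleGraph V} {A B P S T U : Set V} {a b c x y : V}

/-- `a` and `b` are joined by a walk all of whose vertices lie in `U`. -/
def ReachableIn (G : SimpleGraph V) (U : Set V) (a b : V) : Prop :=
  ∃ p : G.Walk a b, ∀ v ∈ p.support, v ∈ U

namespace ReachableIn

theorem refl (ha : a ∈ U) : G.ReachableIn U a a :=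
  ⟨Walk.nil, by simpa using ha⟩

theorem symm (h : G.ReachableIn U a b) : G.ReachableIn U b a := by
  obtain ⟨p, hp⟩ := h
  exact ⟨p.reverse, by simpa using hp⟩

theorem trans (h : G.ReachableIn U a b) (h' : G.ReachableIn U b c) : G.ReachableIn U a c := by
  obtain ⟨p, hp⟩ := h
  obtain ⟨q, hq⟩ := h'
  refine ⟨p.append q, fun v hv => ?_⟩
  rcases (Walk.mem_support_append_iff _ _).1 hv with hv | hv
  exacts [hp v hv, hq v hv]

theorem mono (hGH : G ≤ H) (hUT : U ⊆ T) (h : G.ReachableIn U a b) : H.ReachableIn T a b := by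
  obtain ⟨p, hp⟩ := h
  exact ⟨p.mapLe hGH, fun v hv => hUT (hp v (by simpa using hv))⟩

theorem of_adj (h : G.Adj a b) (ha : a ∈ U) (hb : b ∈ U) : G.ReachableIn U a b :=
  ⟨h.toWalk, by simp [ha, hb]⟩

theorem left_mem (h : G.ReachableIn U a b) : a ∈ U := by
  obtain ⟨p, hp⟩ := h
  exact hp a p.start_mem_support

theorem right_mem (h : G.ReachableIn U a b) : b ∈ U := h.symm.left_mem

/-- Induction on the first edge of a walk inside `U`. -/
@[elab_as_elim]
theorem head_induction {motive : V → Prop} (h : G.ReachableIn U a b) (base : b ∈ U → motive b)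
    (step : ∀ a c, a ∈ U → G.Adj a c → G.ReachableIn U c b → motive c → motive a) :
    motive a := by
  obtain ⟨p, hp⟩ := h
  induction p with
  | nil => exact base (hp _ (by simp))
  | cons hadj p ih =>
    have hp' : ∀ v ∈ p.support, v ∈ U := fun v hv => hp v (by simp [hv])
    exact step _ _ (hp _ (by simp)) hadj ⟨p, hp'⟩ (ih base step hp')

/-- A walk inside `U` either avoids `S` or reaches a vertex of `S`. -/
theorem avoids_or_reaches (S : Set V) (h : G.ReachableIn U a b) :
    G.ReachableIn Sᶜ a b ∨ ∃ z ∈ S, G.ReachableIn U a z := by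
  refine h.head_induction (fun hb => ?_) fun a c ha hac _ ih => ?_
  · by_cases hS : b ∈ S
    · exact .inr ⟨b, hS, refl hb⟩
    · exact .inl (refl hS)
  · by_cases hS : a ∈ S
    · exact .inr ⟨a, hS, refl ha⟩
    · rcases ih with ih | ⟨z, hz, ih⟩
      · exact .inl ((of_adj hac hS ih.left_mem).trans ih)
      · exact .inr ⟨z, hz, (of_adj hac ha ih.left_mem).trans ih⟩

/-- If `G` has at most the edge `xy` more than `H`, then a walk in `G` can be replaced by a walk in
`H`, or by two walks in `H` joined by that edge. -/
theorem of_adj_or (hadj : ∀ u v, G.Adj u v → H.Adj u v ∨ (u = x ∧ v = y) ∨ (u = y ∧ v = x))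
    (h : G.ReachableIn U a b) :
    H.ReachableIn U a b ∨ (H.ReachableIn U a x ∧ H.ReachableIn U y b) ∨
      (H.ReachableIn U a y ∧ H.ReachableIn U x b) := by
  refine h.head_induction (fun hb => .inl (refl hb)) fun a c ha hac hcb ih => ?_
  rcases hadj a c hac with hH | ⟨rfl, rfl⟩ | ⟨rfl, rfl⟩
  · have hc := of_adj hH ha hcb.left_mem
    rcases ih with ih | ⟨ih, ih'⟩ | ⟨ih, ih'⟩
    · exact .inl (hc.trans ih)
    · exact .inr (.inl ⟨hc.trans ih, ih'⟩)
    · exact .inr (.inr ⟨hc.trans ih, ih'⟩)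
  · rcases ih with ih | ⟨-, ih⟩ | ⟨-, ih⟩
    · exact .inr (.inl ⟨refl ha, ih⟩)
    · exact .inr (.inl ⟨refl ha, ih⟩)
    · exact .inl ih
  · rcases ih with ih | ⟨-, ih⟩ | ⟨-, ih⟩
    · exact .inr (.inr ⟨refl ha, ih⟩)
    · exact .inl ih
    · exact .inr (.inr ⟨refl ha, ih⟩)

/-- A walk ending in `P` can be cut at its first vertex `p` in `P`; here `W` is the vertex set of
the initial segment. -/
theorem exists_first_hit (h : G.ReachableIn U a b) (hb : b ∈ P) :
    ∃ p ∈ P, ∃ W ⊆ U, p ∈ W ∧ a ∈ W ∧ (∀ z ∈ W, z ∈ P → z = p) ∧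
      (∀ z ∈ W, G.ReachableIn W p z) ∧ ∀ z ∈ W, z ≠ p → G.ReachableIn (W \ {p}) a z := by
  have single : ∀ a ∈ U, a ∈ P → ∃ p ∈ P, ∃ W ⊆ U, p ∈ W ∧ a ∈ W ∧ (∀ z ∈ W, z ∈ P → z = p) ∧
      (∀ z ∈ W, G.ReachableIn W p z) ∧ ∀ z ∈ W, z ≠ p → G.ReachableIn (W \ {p}) a z := by
    intro a ha haP
    refine ⟨a, haP, {a}, by simpa using ha, rfl, rfl, fun z hz _ => hz, ?_, ?_⟩
    · rintro z rfl
      exact refl rfl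
    · intro z hz hne
      exact absurd hz hne
  refine h.head_induction (fun hbU => single b hbU hb) fun a c ha hac _ ih => ?_
  by_cases haP : a ∈ P
  · exact single a ha haP
  obtain ⟨p, hp, W, hWU, hpW, hcW, hWP, hconn, hcut⟩ := ih
  have hap : a ≠ p := fun h => haP (h ▸ hp)
  refine ⟨p, hp, insert a W, Set.insert_subset ha hWU, .inr hpW, .inl rfl, ?_, ?_, ?_⟩
  · rintro z (rfl | hz) hzP
    exacts [absurd hzP haP, hWP z hz hzP]
  · rintro z (rfl | hz)
    · exact ((hconn c hcW).mono le_rfl (Set.subset_insert _ _)).trans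
        (of_adj hac.symm (.inr hcW) (.inl rfl))
    · exact (hconn z hz).mono le_rfl (Set.subset_insert _ _)
  · rintro z (rfl | hz) hne
    · exact refl ⟨.inl rfl, hne⟩
    · have hcz : G.ReachableIn (insert a W \ {p}) c z := (hcut z hz hne).mono le_rfl
        (Set.sdiff_subset_sdiff_left (Set.subset_insert a W))
      exact (of_adj (U := insert a W \ {p}) hac ⟨.inl rfl, hap⟩ hcz.left_mem).trans hcz

end ReachableIn

/-- Every walk from `A` to `B` meets `X`. -/
def Separates (G : SimpleGraph V) (A B X : Set V) : Prop :=
  ∀ a ∈ A, ∀ b ∈ B, ¬ G.ReachableIn Xᶜ a b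

theorem Separates.symm (h : G.Separates A B S) : G.Separates B A S :=
  fun b hb a ha hr => h a ha b hb hr.symm

/-- There are `k` pairwise disjoint connected vertex sets, each meeting both `A` and `B`. -/
def Linked (G : SimpleGraph V) (A B : Set V) (k : ℕ) : Prop :=
  ∃ U : Fin k → Set V, Pairwise (Function.onFun Disjoint U) ∧
    ∀ i, (∃ a ∈ A, a ∈ U i) ∧ (∃ b ∈ B, b ∈ U i) ∧
      ∀ u ∈ U i, ∀ v ∈ U i, G.ReachableIn (U i) u v

/-- A linkage from `A` onto a set `P` of exactly `k` vertices can be indexed by `P` and trimmed so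
that each member meets `P` only at its end. -/
theorem Linked.exists_fan {P : Finset V} (h : G.Linked A P P.card) (hSP : S ⊆ P) :
    ∃ W : V → Set V, (∀ p ∈ P, ∀ q ∈ P, p ≠ q → Disjoint (W p) (W q)) ∧
      ∀ p ∈ P, p ∈ W p ∧ (∃ a ∈ A, a ∈ W p) ∧ (∀ z ∈ W p, z ∈ P → z = p) ∧
        (∀ z ∈ W p, G.ReachableIn (W p) p z) ∧
        ∀ z ∈ W p, z ∉ S → ∃ a ∈ A, G.ReachableIn Sᶜ a z := by
  classical
  obtain ⟨U, hdisj, hU⟩ := h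
  have hfan : ∀ i, ∃ p ∈ P, ∃ W ⊆ U i, p ∈ W ∧ (∃ a ∈ A, a ∈ W) ∧ (∀ z ∈ W, z ∈ P → z = p) ∧
      (∀ z ∈ W, G.ReachableIn W p z) ∧
      ∀ z ∈ W, z ∉ S → ∃ a ∈ A, G.ReachableIn Sᶜ a z := by
    intro i
    obtain ⟨⟨a, haA, ha⟩, ⟨b, hbP, hb⟩, hconn⟩ := hU i
    obtain ⟨p, hp, W, hWU, hpW, haW, hWP, hW, hcut⟩ := (hconn a ha b hb).exists_first_hit hbP
    refine ⟨p, hp, W, hWU, hpW, ⟨a, haA, haW⟩, hWP, hW, fun z hz hzS => ⟨a, haA, ?_⟩⟩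
    by_cases hzp : z = p
    · subst hzp
      refine (hW a haW).symm.mono le_rfl fun w hw hwS => hzS ?_
      exact hWP w hw (hSP hwS) ▸ hwS
    · exact (hcut z hz hzp).mono le_rfl fun w hw hwS => hw.2 (hWP w hw.1 (hSP hwS))
  choose e heP W hWU heW hA hWP hconn hS using hfan
  have heinj : Function.Injective e := by
    intro i j hij
    by_contra hne
    exact Set.disjoint_left.1 (hdisj hne) (hWU i (heW i)) (hij ▸ hWU j (heW j))
  have hesurj : ∀ p ∈ P, ∃ i, e i = p := by
    have himage : Finset.univ.image e = P := Finset.eq_of_subset_of_card_le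
      (by simpa [Finset.subset_iff] using heP) (by simp [Finset.card_image_of_injective _ heinj])
    intro p hp
    rw [← himage] at hp
    simpa using hp
  refine ⟨Function.extend e W fun _ => ∅, fun p hp q hq hpq => ?_, fun p hp => ?_⟩
  · obtain ⟨i, rfl⟩ := hesurj p hp
    obtain ⟨j, rfl⟩ := hesurj q hq
    rw [heinj.extend_apply, heinj.extend_apply]
    exact (hdisj fun h => hpq (congrArg e h)).mono (hWU i) (hWU j)
  · obtain ⟨i, rfl⟩ := hesurj p hp
    rw [heinj.extend_apply]
    exact ⟨heW i, hA i, hWP i, hconn i, hS i⟩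

/-- Suppose `G` has at most the edge `xy` more than `H`, and `S` separates `A` from `B` in `H`,
with `y` on the side of `B`. Then separating `A` from `S ∪ {x}` in `H` separates `A` from `B` in
`G`. -/
theorem Separates.of_insert {X : Set V}
    (hadj : ∀ u v, G.Adj u v → H.Adj u v ∨ (u = x ∧ v = y) ∨ (u = y ∧ v = x))
    (hS : H.Separates A B S) (hb : b ∈ B) (hyb : H.ReachableIn Sᶜ y b)
    (hX : H.Separates A (insert x S) X) : G.Separates A B X := by
  intro a ha b' hb' hab
  rcases hab.of_adj_or hadj with h | ⟨h, -⟩ | ⟨h, -⟩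
  · rcases h.avoids_or_reaches S with h | ⟨z, hz, h⟩
    · exact hS a ha b' hb' h
    · exact hX a ha z (.inr hz) h
  · exact hX a ha x (.inl rfl) h
  · rcases h.avoids_or_reaches S with h | ⟨z, hz, h⟩
    · exact hS a ha b hb (h.trans hyb)
    · exact hX a ha z (.inr hz) h

/-- Fans from `A` onto `S ∪ {x}` and from `B` onto `S ∪ {y}` on the two sides of a separator `S` of
`H` combine to a linkage in any larger graph containing the edge `xy`. -/
theorem Linked.glue [DecidableEq V] {S : Finset V} (hHG : H ≤ G) (hxy : G.Adj x y)
    (hS : H.Separates A B S) (hx : x ∉ S) (hy : y ∉ S)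
    (hA : H.Linked A (insert x S : Finset V) (insert x S).card)
    (hB : H.Linked B (insert y S : Finset V) (insert y S).card) :
    G.Linked A B (insert x S).card := by
  obtain ⟨W, hWdisj, hW⟩ := hA.exists_fan (S := S) (by simp)
  obtain ⟨W', hWdisj', hW'⟩ := hB.exists_fan (S := S) (by simp)
  set f : V → V := fun p => if p = x then y else p with hf
  have hfx : f x = y := by simp [hf]
  have hfS : ∀ p ∈ S, f p = p := fun p hp => if_neg fun h : p = x => hx (h ▸ hp)
  have hfmem : ∀ p ∈ insert x S, f p ∈ insert y S := by
    intro p hp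
    rcases Finset.mem_insert.1 hp with rfl | hp
    · simp [hfx]
    · simp [hfS p hp, hp]
  have hfinj : ∀ p ∈ insert x S, ∀ q ∈ insert x S, p ≠ q → f p ≠ f q := by
    intro p hp q hq hpq
    rcases Finset.mem_insert.1 hp with hpx | hpS <;>
      rcases Finset.mem_insert.1 hq with hqx | hqS
    · exact absurd (hpx.trans hqx.symm) hpq
    · rw [hpx, hfx, hfS q hqS]
      exact fun h => hy (h ▸ hqS)
    · rw [hqx, hfx, hfS p hpS]
      exact fun h => hy (h ▸ hpS)
    · rwa [hfS p hpS, hfS q hqS]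
  have hcross : ∀ p ∈ insert x S, ∀ q ∈ insert x S, p ≠ q → Disjoint (W p) (W' (f q)) := by
    intro p hp q hq hpq
    refine Set.disjoint_left.2 fun z hz hz' => ?_
    obtain ⟨-, -, hWP, -, hside⟩ := hW p hp
    obtain ⟨-, -, hWP', -, hside'⟩ := hW' (f q) (hfmem q hq)
    by_cases hzS : z ∈ S
    · have hzp := hWP z hz (by simp [hzS])
      have hzq := hWP' z hz' (by simp [hzS])
      refine hfinj p hp q hq hpq ?_
      rw [← hzq, ← hzp, hfS z hzS]
    · obtain ⟨a, ha, haz⟩ := hside z hz (by simpa using hzS)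
      obtain ⟨b, hb, hbz⟩ := hside' z hz' (by simpa using hzS)
      exact hS a ha b hb (haz.trans hbz.symm)
  let e := (insert x S).equivFin.symm
  refine ⟨fun i => W (e i) ∪ W' (f (e i)), fun i j hij => ?_, fun i => ?_⟩
  · have hne : (e i : V) ≠ e j := fun h => hij (e.injective (Subtype.ext h))
    have hi := (e i).2
    have hj := (e j).2
    simp only [Function.onFun, Set.disjoint_union_left, Set.disjoint_union_right]
    exact ⟨⟨hWdisj _ hi _ hj hne, (hcross _ hj _ hi hne.symm).symm⟩,
      hcross _ hi _ hj hne, hWdisj' _ (hfmem _ hi) _ (hfmem _ hj) (hfinj _ hi _ hj hne)⟩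
  · dsimp only
    obtain ⟨p, hp⟩ := e i
    obtain ⟨hpW, ⟨a, haA, ha⟩, -, hconn, -⟩ := hW p hp
    obtain ⟨hpW', ⟨b, hbB, hb⟩, -, hconn', -⟩ := hW' (f p) (hfmem p hp)
    refine ⟨⟨a, haA, .inl ha⟩, ⟨b, hbB, .inr hb⟩, ?_⟩
    have hjoin : G.ReachableIn (W p ∪ W' (f p)) p (f p) := by
      rcases Finset.mem_insert.1 hp with rfl | hpS
      · exact .of_adj (hfx ▸ hxy) (.inl hpW) (.inr hpW')
      · rw [hfS p hpS]
        exact .refl (.inl hpW)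
    have hcenter : ∀ z ∈ W p ∪ W' (f p), G.ReachableIn (W p ∪ W' (f p)) p z := by
      rintro z (hz | hz)
      · exact (hconn z hz).mono hHG Set.subset_union_left
      · exact hjoin.trans ((hconn' z hz).mono hHG Set.subset_union_right)
    exact fun u hu v hv => (hcenter u hu).symm.trans (hcenter v hv)

/-- The induction step of Menger's theorem, for the graph `H` obtained from `G` by deleting `xy`
and a small separator `S` of `H` with `x` on the side of `A` and `y` on the side of `B`. -/
theorem Linked.of_delete_edge [DecidableEq V] {S : Finset V} {k : ℕ} (hHG : H ≤ G)
    (hxy : G.Adj x y)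
    (hadj : ∀ u v, G.Adj u v → H.Adj u v ∨ (u = x ∧ v = y) ∨ (u = y ∧ v = x))
    (ih : ∀ (A B : Set V) (k : ℕ), (∀ X : Finset V, H.Separates A B X → k ≤ X.card) →
      H.Linked A B k)
    (hk : ∀ X : Finset V, G.Separates A B X → k ≤ X.card)
    (hS : H.Separates A B S) (hSk : S.card < k)
    (ha : a ∈ A) (hax : H.ReachableIn (S : Set V)ᶜ a x)
    (hb : b ∈ B) (hyb : H.ReachableIn (S : Set V)ᶜ y b) : G.Linked A B k := by
  have hadj' : ∀ u v, G.Adj u v → H.Adj u v ∨ (u = y ∧ v = x) ∨ (u = x ∧ v = y) :=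
    fun u v h => (hadj u v h).imp_right Or.symm
  have hx : x ∉ S := by simpa using hax.right_mem
  have hy : y ∉ S := by simpa using hyb.left_mem
  have hsep : G.Separates A B (insert x S : Finset V) := by
    intro a' ha' b' hb' h
    rcases h.of_adj_or hadj with h | ⟨h, -⟩ | ⟨-, h⟩
    · exact hS a' ha' b' hb' (h.mono le_rfl (by simp))
    · exact h.right_mem (by simp)
    · exact h.left_mem (by simp)
  have hcardx : (insert x S).card = k := by
    have := hk _ hsep
    rw [Finset.card_insert_of_notMem hx] at this ⊢
    omega
  have hcardy : (insert y S).card = k := by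
    rw [← hcardx, Finset.card_insert_of_notMem hx, Finset.card_insert_of_notMem hy]
  have hA : H.Linked A (insert x S : Finset V) k := ih _ _ _ fun X hX =>
    hk X (hS.of_insert hadj hb hyb (by simpa using hX))
  have hB : H.Linked B (insert y S : Finset V) k := ih _ _ _ fun X hX =>
    hk X (hS.symm.of_insert hadj' ha hax.symm (by simpa using hX)).symm
  rw [← hcardx]
  exact Linked.glue hHG hxy hS hx hy (by rwa [hcardx]) (by rwa [hcardy])

/-- If every set separating `A` from `B` has at least `k` vertices, then there are `k` disjoint
connected sets linking `A` to `B`. -/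
theorem linked_of_forall_le_card [Finite V] (G : SimpleGraph V) (A B : Set V) (k : ℕ)
    (hk : ∀ X : Finset V, G.Separates A B X → k ≤ X.card) : G.Linked A B k := by
  classical
  have := Fintype.ofFinite V
  induction G using WellFoundedLT.induction generalizing A B k with
  | ind G ih =>
    by_cases hedge : ∃ x y, G.Adj x y
    · obtain ⟨x, y, hxy⟩ := hedge
      set H := G.deleteEdges {s(x, y)} with hH
      have hHG : H ≤ G := G.deleteEdges_le _
      have hlt : H < G := lt_of_le_of_ne hHG fun h => by
        have : H.Adj x y := h ▸ hxy
        simp [hH] at this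
      have hadj : ∀ u v, G.Adj u v → H.Adj u v ∨ (u = x ∧ v = y) ∨ (u = y ∧ v = x) := by
        intro u v huv
        simp only [hH, deleteEdges_adj, Set.mem_singleton_iff, Sym2.eq_iff]
        tauto
      by_cases hHk : ∀ X : Finset V, H.Separates A B X → k ≤ X.card
      · obtain ⟨U, hdisj, hU⟩ := ih H hlt A B k hHk
        exact ⟨U, hdisj, fun i => ⟨(hU i).1, (hU i).2.1, fun u hu v hv =>
          ((hU i).2.2 u hu v hv).mono hHG subset_rfl⟩⟩
      · push Not at hHk
        obtain ⟨S, hS, hSk⟩ := hHk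
        have hSG : ¬ G.Separates A B S := fun h => absurd (hk S h) (by omega)
        simp only [Separates, not_forall, not_not] at hSG
        obtain ⟨a, ha, b, hb, hab⟩ := hSG
        rcases hab.of_adj_or hadj with h | ⟨h, h'⟩ | ⟨h, h'⟩
        · exact absurd h (hS a ha b hb)
        · exact .of_delete_edge hHG hxy hadj (ih H hlt) hk hS hSk ha h hb h'
        · exact .of_delete_edge hHG hxy.symm (fun u v huv => (hadj u v huv).imp_right Or.symm)
            (ih H hlt) hk hS hSk ha h hb h'
    · push Not at hedge
      have hsep : G.Separates A B (A ∩ B).toFinset := by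
        intro a ha b hb h
        have hmem := h.right_mem
        have heq : a = b := h.head_induction (fun _ => rfl)
          fun a c _ hac _ _ => absurd hac (hedge a c)
        subst heq
        exact hmem (by simp [ha, hb])
      obtain ⟨T, hT, hTk⟩ := Finset.exists_subset_card_eq (hk _ hsep)
      let e := (T.equivFinOfCardEq hTk).symm
      refine ⟨fun i => {(e i : V)}, fun i j hij => ?_, fun i => ?_⟩
      · simpa [Function.onFun, Subtype.ext_iff] using
          fun h : (e i : V) = e j => hij (e.injective (Subtype.ext h))
      · have hi : (e i : V) ∈ A ∩ B := by simpa using hT (e i).2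
        refine ⟨⟨_, hi.1, rfl⟩, ⟨_, hi.2, rfl⟩, ?_⟩
        rintro u rfl v rfl
        exact .refl rfl

end SimpleGraph

/-- Menger's theorem (vertex version): in a finite connected graph `G`, for vertex sets
`A` and `B`, the minimum size of a vertex set meeting every `A`–`B` walk equals the
maximum number of pairwise vertex-disjoint `A`–`B` paths. -/
theorem menger_vertex {V : Type*} [Fintype V] [DecidableEq V]
    (G : SimpleGraph V) (hG : G.Connected) (A B : Set V) :
    sInf {n : ℕ | ∃ X : Finset V, X.card = n ∧
        ∀ a ∈ A, ∀ b ∈ B, ∀ p : G.Walk a b, ∃ x ∈ X, x ∈ p.support}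
      = sSup {n : ℕ | ∃ f : Fin n → Σ a : V, Σ b : V, G.Walk a b,
          (∀ i, (f i).1 ∈ A ∧ (f i).2.1 ∈ B ∧ (f i).2.2.IsPath) ∧
          ∀ i j, i ≠ j → ∀ x : V,
            x ∈ (f i).2.2.support → x ∉ (f j).2.2.support} := by
  set N : Set ℕ := {n : ℕ | ∃ X : Finset V, X.card = n ∧
    ∀ a ∈ A, ∀ b ∈ B, ∀ p : G.Walk a b, ∃ x ∈ X, x ∈ p.support}
  have hne : N.Nonempty :=
    ⟨_, Finset.univ, rfl, fun a _ _ _ p => ⟨a, Finset.mem_univ a, p.start_mem_support⟩⟩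
  refine (IsGreatest.csSup_eq ⟨?_, ?_⟩).symm
  · have hlink : G.Linked A B (sInf N) := by
      refine G.linked_of_forall_le_card A B _ fun X hX => Nat.sInf_le ⟨X, rfl, ?_⟩
      intro a ha b hb p
      by_contra! hp
      exact hX a ha b hb ⟨p, fun v hv hvX => hp v hvX hv⟩
    obtain ⟨U, hdisj, hU⟩ := hlink
    have hpath : ∀ i, ∃ w : Σ a : V, Σ b : V, G.Walk a b,
        (w.1 ∈ A ∧ w.2.1 ∈ B ∧ w.2.2.IsPath) ∧ ∀ v ∈ w.2.2.support, v ∈ U i := by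
      intro i
      obtain ⟨⟨a, haA, ha⟩, ⟨b, hbB, hb⟩, hconn⟩ := hU i
      obtain ⟨p, hp⟩ := hconn a ha b hb
      exact ⟨⟨a, b, p.bypass⟩, ⟨haA, hbB, p.bypass_isPath⟩,
        fun v hv => hp v (p.support_bypass_subset_support hv)⟩
    choose f hf hfU using hpath
    exact ⟨f, hf, fun i j hij v hi hj =>
      Set.disjoint_left.1 (hdisj hij) (hfU i v hi) (hfU j v hj)⟩
  · rintro n ⟨f, hf, hdisj⟩
    obtain ⟨X, hXcard, hX⟩ := Nat.sInf_mem hne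
    choose g hgX hg using fun i => hX _ (hf i).1 _ (hf i).2.1 (f i).2.2
    have hinj : Function.Injective fun i => (⟨g i, hgX i⟩ : X) := by
      intro i j hij
      by_contra hne
      have hij' : g i = g j := congrArg Subtype.val hij
      exact hdisj i j hne (g i) (hg i) (hij' ▸ hg j)
    rw [← hXcard]
    simpa using Fintype.card_le_of_injective _ hinj
end
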